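/- For every n ≥ 1, all permutations σ, π ∈ S_n, and every subset P ⊆ [n] with complement Q = [n] \ P, we have d∘(σ,π) ≥ (|P| − l(σ_P,π_P)) + (|Q| − l(σ_Q,π_Q)); equivalently, l(σ,π) ≤ l(σ_P,π_P) + l(σ_Q,π_Q). -/

import Mathlib

/-- `IsMove l l'` holds if `l'` is obtained from `l` by a single translocation:
removing the element at position `i` and reinserting it at position `j`. -/
def IsMove {α : Type*} (l l' : List α) : Prop :=
  ∃ i j : Fin l.length, l' = (l.eraseIdx i).insertIdx j (l.get i)

/-- `ReachIn step m l l'` holds if `l'` can be obtained from `l` by `m` applications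
of the relation `step`. -/
def ReachIn {α : Type*} (step : List α → List α → Prop) : ℕ → List α → List α → Prop
  | 0, l, l' => l = l'
  | m+1, l, l' => ∃ l'', step l l'' ∧ ReachIn step m l'' l'

/-- The one-line notation of a permutation of `Fin n`. -/
def oneLine {n : ℕ} (σ : Equiv.Perm (Fin n)) : List (Fin n) := List.ofFn σ

/-- The translocation distance: the minimum number of translocations transforming
the one-line notation of `σ` into that of `π`. -/
noncomputable def translocDist {n : ℕ} (σ π : Equiv.Perm (Fin n)) : ℕ :=
  sInf {m | ReachIn IsMove m (oneLine σ) (oneLine π)}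

/-- The length of the longest common subsequence of two lists. -/
noncomputable def lcsLen {α : Type*} (l₁ l₂ : List α) : ℕ :=
  sSup {m | ∃ w : List α, w.length = m ∧ w.Sublist l₁ ∧ w.Sublist l₂}

/-!
Call `l.length - lcsLen l l'` the defect of `l'` from `l`. Intersecting two subsequences of the
middle list shows that the defect satisfies the triangle inequality, and a single translocation has
defect at most one, so the translocation distance is at least the defect. Restricting a longest
common subsequence to the entries in `P` and to those outside `P` gives common subsequences of the
two projections, so the defects of the projections add up to at most that of the permutations.
-/

section CommonSubsequence

variable {α : Type*} {l l₁ l₂ l₃ u w : List α}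

theorem bddAbove_length_common_sublist (l₁ l₂ : List α) :
    BddAbove {m | ∃ w : List α, w.length = m ∧ w.Sublist l₁ ∧ w.Sublist l₂} := by
  refine ⟨l₁.length, ?_⟩
  rintro _ ⟨w, rfl, hw, _⟩
  exact hw.length_le

theorem length_le_lcsLen (h₁ : w.Sublist l₁) (h₂ : w.Sublist l₂) : w.length ≤ lcsLen l₁ l₂ :=
  le_csSup (bddAbove_length_common_sublist l₁ l₂) ⟨w, rfl, h₁, h₂⟩

theorem exists_common_sublist_length_eq_lcsLen (l₁ l₂ : List α) :
    ∃ w : List α, w.length = lcsLen l₁ l₂ ∧ w.Sublist l₁ ∧ w.Sublist l₂ := by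
  refine Nat.sSup_mem ?_ (bddAbove_length_common_sublist l₁ l₂)
  exact ⟨0, [], rfl, l₁.nil_sublist, l₂.nil_sublist⟩

theorem lcsLen_le_length_left (l₁ l₂ : List α) : lcsLen l₁ l₂ ≤ l₁.length := by
  obtain ⟨w, hw, h₁, -⟩ := exists_common_sublist_length_eq_lcsLen l₁ l₂
  exact hw ▸ h₁.length_le

theorem exists_sublist_sublist_length_add_le (hu : u.Sublist l) (hw : w.Sublist l) :
    ∃ v : List α, v.Sublist u ∧ v.Sublist w ∧ u.length + w.length ≤ v.length + l.length := by
  induction hu generalizing w with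
  | slnil => exact ⟨[], List.nil_sublist _, List.nil_sublist _, by simpa using hw.length_le⟩
  | cons a _ ih =>
    cases hw with
    | cons _ hw =>
      obtain ⟨v, hvu, hvw, hlen⟩ := ih hw
      exact ⟨v, hvu, hvw, by grind⟩
    | cons_cons _ hw =>
      obtain ⟨v, hvu, hvw, hlen⟩ := ih hw
      exact ⟨v, hvu, hvw.cons a, by grind⟩
  | cons_cons a _ ih =>
    cases hw with
    | cons _ hw =>
      obtain ⟨v, hvu, hvw, hlen⟩ := ih hw
      exact ⟨v, hvu.cons a, hvw, by grind⟩
    | cons_cons _ hw =>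
      obtain ⟨v, hvu, hvw, hlen⟩ := ih hw
      exact ⟨a :: v, hvu.cons_cons a, hvw.cons_cons a, by grind⟩

theorem lcsLen_add_lcsLen_le (l₁ l₂ l₃ : List α) :
    lcsLen l₁ l₂ + lcsLen l₂ l₃ ≤ lcsLen l₁ l₃ + l₂.length := by
  obtain ⟨u, hu, hu₁, hu₂⟩ := exists_common_sublist_length_eq_lcsLen l₁ l₂
  obtain ⟨w, hw, hw₂, hw₃⟩ := exists_common_sublist_length_eq_lcsLen l₂ l₃
  obtain ⟨v, hvu, hvw, hlen⟩ := exists_sublist_sublist_length_add_le hu₂ hw₂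
  have hv : v.length ≤ lcsLen l₁ l₃ := length_le_lcsLen (hvu.trans hu₁) (hvw.trans hw₃)
  omega

theorem lcsLen_le_lcsLen_filter_add (p : α → Bool) (l₁ l₂ : List α) :
    lcsLen l₁ l₂ ≤ lcsLen (l₁.filter p) (l₂.filter p) +
      lcsLen (l₁.filter fun x => !p x) (l₂.filter fun x => !p x) := by
  obtain ⟨w, hw, h₁, h₂⟩ := exists_common_sublist_length_eq_lcsLen l₁ l₂
  calc lcsLen l₁ l₂ = (w.filter p).length + (w.filter fun x => !p x).length := by
        rw [← hw, List.length_eq_length_filter_add p]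
    _ ≤ lcsLen (l₁.filter p) (l₂.filter p) +
          lcsLen (l₁.filter fun x => !p x) (l₂.filter fun x => !p x) :=
      add_le_add (length_le_lcsLen (h₁.filter _) (h₂.filter _))
        (length_le_lcsLen (h₁.filter _) (h₂.filter _))

end CommonSubsequence

section Translocation

variable {α : Type*} {l l' : List α}

theorem IsMove.length_le_lcsLen_add_one (h : IsMove l l') : l.length ≤ lcsLen l l' + 1 := by
  obtain ⟨i, j, rfl⟩ := h
  have hle : (l.eraseIdx i).length ≤ lcsLen l ((l.eraseIdx i).insertIdx j (l.get i)) :=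
    length_le_lcsLen (l.eraseIdx_sublist i) (List.sublist_insertIdx _ j (l.get i))
  rw [List.length_eraseIdx_of_lt i.isLt] at hle
  omega

theorem IsMove.cons (x : α) (h : IsMove l l') : IsMove (x :: l) (x :: l') := by
  obtain ⟨i, j, rfl⟩ := h
  exact ⟨i.succ, j.succ, by simp⟩

theorem ReachIn.length_le_lcsLen_add {m : ℕ} (h : ReachIn IsMove m l l') :
    l.length ≤ lcsLen l l' + m := by
  induction m generalizing l with
  | zero =>
    obtain rfl : l = l' := h
    exact length_le_lcsLen (List.Sublist.refl l) (List.Sublist.refl l)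
  | succ m ih =>
    obtain ⟨l'', hmove, hreach⟩ := h
    have hstep : l.length ≤ lcsLen l l'' + 1 := hmove.length_le_lcsLen_add_one
    have hrest : l''.length ≤ lcsLen l'' l' + m := ih hreach
    have htriangle : lcsLen l l'' + lcsLen l'' l' ≤ lcsLen l l' + l''.length :=
      lcsLen_add_lcsLen_le l l'' l'
    omega

theorem exists_reachIn_of_reflTransGen {step : List α → List α → Prop}
    (h : Relation.ReflTransGen step l l') : ∃ m, ReachIn step m l l' := by
  induction h using Relation.ReflTransGen.head_induction_on with
  | refl => exact ⟨0, rfl⟩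
  | head hstep _ ih =>
    obtain ⟨m, hm⟩ := ih
    exact ⟨m + 1, _, hstep, hm⟩

theorem reflTransGen_isMove_of_perm (h : l.Perm l') : Relation.ReflTransGen IsMove l l' := by
  induction h with
  | nil => exact .refl
  | cons x _ ih => exact ih.lift (x :: ·) fun _ _ => IsMove.cons x
  | swap x y l => exact .single ⟨⟨0, by simp⟩, ⟨1, by simp⟩, by simp⟩
  | trans _ _ ih₁ ih₂ => exact ih₁.trans ih₂

end Translocation

section OneLine

variable {n : ℕ}

theorem oneLine_perm_finRange (σ : Equiv.Perm (Fin n)) : (oneLine σ).Perm (List.finRange n) := by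
  rw [oneLine, List.ofFn_eq_map]
  exact σ.map_finRange_perm

theorem length_filter_mem_oneLine (σ : Equiv.Perm (Fin n)) (P : Finset (Fin n)) :
    ((oneLine σ).filter fun x => decide (x ∈ P)).length = P.card := by
  have hnodup : (oneLine σ).Nodup := List.nodup_ofFn.2 σ.injective
  rw [← List.toFinset_card_of_nodup (hnodup.filter _)]
  congr 1
  ext x
  simp [(oneLine_perm_finRange σ).mem_iff]

theorem reachIn_translocDist (σ π : Equiv.Perm (Fin n)) :
    ReachIn IsMove (translocDist σ π) (oneLine σ) (oneLine π) := by
  have hperm : (oneLine σ).Perm (oneLine π) :=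
    (oneLine_perm_finRange σ).trans (oneLine_perm_finRange π).symm
  exact Nat.sInf_mem (exists_reachIn_of_reflTransGen (reflTransGen_isMove_of_perm hperm))

theorem le_lcsLen_oneLine_add_translocDist (σ π : Equiv.Perm (Fin n)) :
    n ≤ lcsLen (oneLine σ) (oneLine π) + translocDist σ π := by
  simpa only [oneLine, List.length_ofFn] using (reachIn_translocDist σ π).length_le_lcsLen_add

theorem lcsLen_filter_mem_oneLine_le_card (σ π : Equiv.Perm (Fin n)) (P : Finset (Fin n)) :
    lcsLen ((oneLine σ).filter fun x => decide (x ∈ P))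
      ((oneLine π).filter fun x => decide (x ∈ P)) ≤ P.card :=
  (lcsLen_le_length_left _ _).trans_eq (length_filter_mem_oneLine σ P)

end OneLine

/-- For every `n ≥ 1`, all `σ, π ∈ S_n`, and every subset `P ⊆ [n]` with complement
`Q`, we have `d∘(σ,π) ≥ (|P| − l(σ_P,π_P)) + (|Q| − l(σ_Q,π_Q))`, where `σ_P` denotes
the projection of the one-line notation of `σ` onto `P`. -/
theorem translocDist_ge_projections (n : ℕ) (hn : 1 ≤ n) (σ π : Equiv.Perm (Fin n))
    (P : Finset (Fin n)) :
    (P.card - lcsLen ((oneLine σ).filter fun x => decide (x ∈ P))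
        ((oneLine π).filter fun x => decide (x ∈ P))) +
      (Pᶜ.card - lcsLen ((oneLine σ).filter fun x => decide (x ∈ Pᶜ))
        ((oneLine π).filter fun x => decide (x ∈ Pᶜ))) ≤
      translocDist σ π := by
  have hP := lcsLen_filter_mem_oneLine_le_card σ π P
  have hPc := lcsLen_filter_mem_oneLine_le_card σ π Pᶜ
  have hdist : n ≤ lcsLen (oneLine σ) (oneLine π) + translocDist σ π :=
    le_lcsLen_oneLine_add_translocDist σ π
  have hsplit := lcsLen_le_lcsLen_filter_add (fun x => decide (x ∈ P)) (oneLine σ) (oneLine π)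
  have hcard : P.card + Pᶜ.card = n := by rw [P.card_add_card_compl, Fintype.card_fin]
  simp only [← decide_not, ← Finset.mem_compl] at hsplit
  omega
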